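/- Let V be a finite set and let h : 2^V → ℝ be a normalized, symmetric, submodular set function (symmetric means h(A) = h(V \ A) for all A ⊆ V). Define f(A) := h(A) + Σ_{i ∈ A} h({i}). Then: (a) h(A) ≥ 0 for all A ⊆ V; (b) f is normalized, monotone, and submodular; and (c) for every A ⊆ V, f(A) + f(V \ A) = 2 h(A) + Σ_{i ∈ V} h({i}). -/

import Mathlib

/-!
Submodularity of `f` is inherited from `h`, as `A ↦ ∑ i ∈ A, h {i}` is modular. For monotonicity,
let `X ⊆ Y`. Since `V \ X` is the disjoint union of `V \ Y` and `Y \ X`, symmetry and submodularity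
give `h X ≤ h Y + h (Y \ X)`, and subadditivity bounds the loss `h (Y \ X)` by the sum of `h {i}`
over `i ∈ Y \ X`, which is what the modular term gains.
-/

section Lattice

/-- Submodularity of a function on a lattice. For set functions take the lattice `Finset V`, where
`⊔` and `⊓` are `∪` and `∩`. -/
def IsSubmodular {α G : Type*} [Lattice α] [Add G] [LE G] (h : α → G) : Prop :=
  ∀ a b, h (a ⊔ b) + h (a ⊓ b) ≤ h a + h b

namespace IsSubmodular

variable {α G : Type*} [AddCommMonoid G]

protected theorem add [Lattice α] [Preorder G] [IsOrderedAddMonoid G] {f g : α → G}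
    (hf : IsSubmodular f) (hg : IsSubmodular g) : IsSubmodular (fun a => f a + g a) := fun a b =>
  calc f (a ⊔ b) + g (a ⊔ b) + (f (a ⊓ b) + g (a ⊓ b))
      = f (a ⊔ b) + f (a ⊓ b) + (g (a ⊔ b) + g (a ⊓ b)) := add_add_add_comm ..
    _ ≤ f a + f b + (g a + g b) := add_le_add (hf a b) (hg a b)
    _ = f a + g a + (f b + g b) := add_add_add_comm ..

theorem apply_sup_le_add_of_disjoint [Lattice α] [OrderBot α] [LE G] {h : α → G}
    (hsub : IsSubmodular h) (hbot : h ⊥ = 0) {a b : α} (hab : Disjoint a b) :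
    h (a ⊔ b) ≤ h a + h b := by
  simpa only [hab.eq_bot, hbot, add_zero] using hsub a b

theorem nonneg_of_apply_compl [BooleanAlgebra α] [LinearOrder G] [IsOrderedAddMonoid G] {h : α → G}
    (hsub : IsSubmodular h) (hbot : h ⊥ = 0) (hsymm : ∀ a, h aᶜ = h a) (a : α) : 0 ≤ h a := by
  have htop : h ⊤ = 0 := by rw [← hsymm, compl_top, hbot]
  have hdouble : 0 ≤ 2 • h a :=
    calc 0 = h (a ⊔ aᶜ) := by rw [sup_compl_eq_top, htop]
      _ ≤ h a + h aᶜ := hsub.apply_sup_le_add_of_disjoint hbot disjoint_compl_right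
      _ = 2 • h a := by rw [hsymm, two_nsmul]
  exact (nsmul_nonneg_iff two_ne_zero).mp hdouble

theorem apply_le_add_apply_sdiff [BooleanAlgebra α] [Preorder G] {h : α → G}
    (hsub : IsSubmodular h) (hbot : h ⊥ = 0) (hsymm : ∀ a, h aᶜ = h a) {a b : α} (hab : a ≤ b) :
    h a ≤ h b + h (b \ a) := by
  have hcompl : aᶜ = bᶜ ⊔ b \ a := by
    rw [sdiff_eq, sup_inf_left, compl_sup_eq_top, top_inf_eq,
      sup_eq_right.mpr (compl_le_compl hab)]
  have hdisj : Disjoint bᶜ (b \ a) := disjoint_compl_left.mono_right sdiff_le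
  calc h a = h (bᶜ ⊔ b \ a) := by rw [← hcompl, hsymm]
    _ ≤ h bᶜ + h (b \ a) := hsub.apply_sup_le_add_of_disjoint hbot hdisj
    _ = h b + h (b \ a) := by rw [hsymm]

end IsSubmodular

end Lattice

section SetFunction

variable {V G : Type*} [AddCommMonoid G]

/-- The set function `f A = h A + ∑ i ∈ A, h {i}`, which is a polymatroid rank function when `h` is
normalized, symmetric and submodular. -/
def addSingletons (h : Finset V → G) (A : Finset V) : G :=
  h A + ∑ i ∈ A, h {i}

theorem addSingletons_empty {h : Finset V → G} (hempty : h ∅ = 0) : addSingletons h ∅ = 0 := by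
  rw [addSingletons, hempty, Finset.sum_empty, add_zero]

variable [DecidableEq V]

theorem addSingletons_add_addSingletons_compl [Fintype V] {h : Finset V → G}
    (hsymm : ∀ A, h Aᶜ = h A) (A : Finset V) :
    addSingletons h A + addSingletons h Aᶜ = 2 • h A + ∑ i, h {i} := by
  rw [addSingletons, addSingletons, add_add_add_comm, hsymm, Finset.sum_add_sum_compl, two_nsmul]

theorem isSubmodular_sum [Preorder G] (w : V → G) :
    IsSubmodular (fun A : Finset V => ∑ i ∈ A, w i) :=
  fun _ _ => Finset.sum_union_inter.le

namespace IsSubmodular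

variable [Preorder G] [IsOrderedAddMonoid G] {h : Finset V → G}

theorem apply_le_sum_singleton (hsub : IsSubmodular h) (hempty : h ∅ = 0) (A : Finset V) :
    h A ≤ ∑ i ∈ A, h {i} := by
  induction A using Finset.induction_on with
  | empty => rw [hempty, Finset.sum_empty]
  | insert a s ha ih =>
    calc h (insert a s) ≤ h {a} + h s :=
          hsub.apply_sup_le_add_of_disjoint hempty (Finset.disjoint_singleton_left.mpr ha)
      _ ≤ h {a} + ∑ i ∈ s, h {i} := by gcongr
      _ = ∑ i ∈ insert a s, h {i} := by rw [Finset.sum_insert ha]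

protected theorem addSingletons (hsub : IsSubmodular h) : IsSubmodular (addSingletons h) :=
  hsub.add (isSubmodular_sum _)

theorem monotone_addSingletons [Fintype V] (hsub : IsSubmodular h) (hempty : h ∅ = 0)
    (hsymm : ∀ A, h Aᶜ = h A) : Monotone (addSingletons h) := fun X Y hXY =>
  calc h X + ∑ i ∈ X, h {i}
      ≤ h Y + h (Y \ X) + ∑ i ∈ X, h {i} := by
        gcongr; exact hsub.apply_le_add_apply_sdiff hempty hsymm hXY
    _ ≤ h Y + ∑ i ∈ Y \ X, h {i} + ∑ i ∈ X, h {i} := by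
        gcongr; exact hsub.apply_le_sum_singleton hempty _
    _ = h Y + ∑ i ∈ Y, h {i} := by rw [add_assoc, Finset.sum_sdiff hXY]

end IsSubmodular

end SetFunction

theorem symmetric_submodular_to_polymatroid_general {V G : Type*} [Fintype V] [DecidableEq V]
    [AddCommMonoid G] [LinearOrder G] [IsOrderedAddMonoid G] {h : Finset V → G}
    (hempty : h ∅ = 0) (hsymm : ∀ A, h Aᶜ = h A) (hsub : IsSubmodular h) :
    (∀ A, 0 ≤ h A) ∧
    addSingletons h ∅ = 0 ∧
    Monotone (addSingletons h) ∧
    IsSubmodular (addSingletons h) ∧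
    ∀ A, addSingletons h A + addSingletons h Aᶜ = 2 • h A + ∑ i, h {i} :=
  ⟨hsub.nonneg_of_apply_compl hempty hsymm, addSingletons_empty hempty,
    hsub.monotone_addSingletons hempty hsymm, hsub.addSingletons,
    addSingletons_add_addSingletons_compl hsymm⟩

/-- For a normalized, symmetric, submodular `h` on a finite ground set `V`, the
function `f(A) = h(A) + Σ_{i ∈ A} h({i})` satisfies: (a) `h ≥ 0`; (b) `f` is
normalized, monotone, and submodular; (c) `f(A) + f(V \ A) = 2h(A) + Σ_{i ∈ V} h({i})`. -/
theorem symmetric_submodular_to_polymatroid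
    {V : Type*} [Fintype V] [DecidableEq V] (h : Finset V → ℝ)
    (hnorm : h ∅ = 0)
    (hsymm : ∀ A : Finset V, h A = h (Finset.univ \ A))
    (hsubmod : ∀ X Y : Finset V, h (X ∪ Y) + h (X ∩ Y) ≤ h X + h Y) :
    let f : Finset V → ℝ := fun A => h A + ∑ i ∈ A, h {i}
    (∀ A : Finset V, 0 ≤ h A) ∧
    (f ∅ = 0) ∧
    (∀ X Y : Finset V, X ⊆ Y → f X ≤ f Y) ∧
    (∀ X Y : Finset V, f (X ∪ Y) + f (X ∩ Y) ≤ f X + f Y) ∧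
    (∀ A : Finset V, f A + f (Finset.univ \ A) = 2 * h A + ∑ i : V, h {i}) := by
  simp only [two_mul, ← two_nsmul]
  exact symmetric_submodular_to_polymatroid_general hnorm (fun A => (hsymm A).symm) hsubmod
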